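/- arXiv:2211.00200 — 2 statements merged into one kernel-verified Lean document; each statement's English description precedes it below -/
import Mathlib

section
/- Let P = [p_0:0:p_2] and Q = [q_0:q_1:0] be points of P^2 with p_0 p_2 q_0 q_1 ≠ 0, and let 1 ≤ m ≤ n be integers. Then I(P)^m ⋆ I(Q)^n = ⟨x_1^m, x_2^n⟩, and consequently I(P ⋆ Q)^{m+n−1} ⊆ I(P)^m ⋆ I(Q)^n ⊆ I(P ⋆ Q)^m, where I(P ⋆ Q) = ⟨x_1, x_2⟩; moreover I(P)^m ⋆ I(Q)^n ≠ I(P ⋆ Q)^{m+n−1} unless m = n = 1. -/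
open MvPolynomial

noncomputable section

variable {K : Type*} [Field K]

/-- The Hadamard product of two ideals `I, J ⊆ K[x_0,x_1,x_2]`: introduce new variables
`y_0,y_1,y_2` and `z_0,z_1,z_2` (encoded via a sum type), map `I` via `x_i ↦ y_i`, `J` via
`x_i ↦ z_i`, add the relations `x_i − y_i z_i`, and eliminate `y, z` (i.e. take the
preimage in `K[x_0,x_1,x_2]`). -/
def hadamard (I J : Ideal (MvPolynomial (Fin 3) K)) : Ideal (MvPolynomial (Fin 3) K) :=
  Ideal.comap
    (rename (Sum.inl : Fin 3 → Fin 3 ⊕ (Fin 3 ⊕ Fin 3)))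
    (Ideal.map (rename (fun i : Fin 3 => (Sum.inr (Sum.inl i) : Fin 3 ⊕ (Fin 3 ⊕ Fin 3)))) I
      + Ideal.map (rename (fun i : Fin 3 => (Sum.inr (Sum.inr i) : Fin 3 ⊕ (Fin 3 ⊕ Fin 3)))) J
      + Ideal.span { f | ∃ i : Fin 3,
          f = X (Sum.inl i) - X (Sum.inr (Sum.inl i)) * X (Sum.inr (Sum.inr i)) })

/-- The homogeneous vanishing ideal of the point `P = [p_0:p_1:p_2] ∈ ℙ²`, generated by
the forms `p_j x_i − p_i x_j`. -/
def pointIdeal (p : Fin 3 → K) : Ideal (MvPolynomial (Fin 3) K) :=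
  Ideal.span { f | ∃ i j : Fin 3, f = C (p j) * X i - C (p i) * X j }

/-- The irrelevant ideal `𝔪 = ⟨x_0,x_1,x_2⟩` of `K[x_0,x_1,x_2]`. -/
def irrelevantIdeal (K : Type*) [Field K] : Ideal (MvPolynomial (Fin 3) K) :=
  Ideal.span (Set.range X)

/-- Membership in the monomial ideal `⟨x_1^m, x_2^n⟩` can be read off the support. -/
theorem mem_span_X_pow_pair {m n : ℕ} {f : MvPolynomial (Fin 3) K} :
    f ∈ Ideal.span {(X 1 : MvPolynomial (Fin 3) K) ^ m, (X 2 : MvPolynomial (Fin 3) K) ^ n} ↔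
      ∀ d ∈ f.support, m ≤ d 1 ∨ n ≤ d 2 := by
  have := mem_ideal_span_monomial_image (x := f)
    (s := {Finsupp.single (1 : Fin 3) m, Finsupp.single (2 : Fin 3) n})
  simpa [Set.image_pair, ← X_pow_eq_monomial] using this

/-- The substitution `x_2 ↦ x_0 x_2`, fixing `x_0` and `x_1`. -/
def chartMap (K : Type*) [Field K] : MvPolynomial (Fin 3) K →ₐ[K] MvPolynomial (Fin 3) K :=
  aeval ![X 0, X 1, X 0 * X 2]

theorem chartMap_monomial (d : Fin 3 →₀ ℕ) (a : K) :
    chartMap K (monomial d a) = monomial (d + Finsupp.single 0 (d 2)) a := by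
  rw [chartMap, aeval_monomial, monomial_eq, Finsupp.prod_fintype _ _ (by simp),
    Finsupp.prod_fintype _ _ (by simp)]
  simp only [Fin.prod_univ_three, algebraMap_eq, Matrix.cons_val, Finsupp.coe_add, Pi.add_apply,
    Finsupp.single_apply, Fin.reduceEq, reduceIte, add_zero, zero_ne_one]
  ring

theorem coeff_chartMap (d : Fin 3 →₀ ℕ) (f : MvPolynomial (Fin 3) K) :
    coeff (d + Finsupp.single 0 (d 2)) (chartMap K f) = coeff d f := by
  induction f using MvPolynomial.induction_on' with
  | monomial u a =>
    rw [chartMap_monomial, coeff_monomial, coeff_monomial]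
    refine if_congr ⟨fun h => ?_, fun h => by rw [h]⟩ rfl rfl
    have h0 := DFunLike.congr_fun h 0
    have h1 := DFunLike.congr_fun h 1
    have h2 := DFunLike.congr_fun h 2
    simp at h0 h1 h2
    ext i
    fin_cases i <;> simp <;> omega
  | add p q hp hq => simp [hp, hq]

theorem mem_span_X_pow_pair_of_chartMap_mem {m n : ℕ} {f : MvPolynomial (Fin 3) K}
    (hf : chartMap K f ∈
      Ideal.span {(X 1 : MvPolynomial (Fin 3) K) ^ m, (X 2 : MvPolynomial (Fin 3) K) ^ n}) :
    f ∈ Ideal.span {(X 1 : MvPolynomial (Fin 3) K) ^ m, (X 2 : MvPolynomial (Fin 3) K) ^ n} := by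
  rw [mem_span_X_pow_pair] at hf ⊢
  intro d hd
  have h := hf (d + Finsupp.single 0 (d 2))
    (by rw [mem_support_iff] at hd ⊢; rwa [coeff_chartMap])
  simpa [Finsupp.single_apply] using h

theorem X_pow_mem_hadamard {I J : Ideal (MvPolynomial (Fin 3) K)} {i : Fin 3} {k : ℕ}
    (h : X i ^ k ∈ I ∨ X i ^ k ∈ J) : X i ^ k ∈ hadamard I J := by
  rw [hadamard, Ideal.mem_comap, map_pow, rename_X]
  set A := Ideal.map
    (rename (R := K) (fun i : Fin 3 => (Sum.inr (Sum.inl i) : Fin 3 ⊕ (Fin 3 ⊕ Fin 3)))) I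
  set B := Ideal.map
    (rename (R := K) (fun i : Fin 3 => (Sum.inr (Sum.inr i) : Fin 3 ⊕ (Fin 3 ⊕ Fin 3)))) J
  set R : Ideal (MvPolynomial (Fin 3 ⊕ (Fin 3 ⊕ Fin 3)) K) := Ideal.span { f | ∃ i : Fin 3,
    f = X (Sum.inl i) - X (Sum.inr (Sum.inl i)) * X (Sum.inr (Sum.inr i)) }
  have hdiff : (X (Sum.inl i) ^ k - (X (Sum.inr (Sum.inl i)) * X (Sum.inr (Sum.inr i))) ^ k :
      MvPolynomial (Fin 3 ⊕ (Fin 3 ⊕ Fin 3)) K) ∈ A + B + R :=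
    Ideal.mem_sup_right <| Ideal.mem_of_dvd _ (sub_dvd_pow_sub_pow _ _ k)
      (Ideal.subset_span ⟨i, rfl⟩)
  refine (Submodule.sub_mem_iff_left _ ?_).mp hdiff
  rw [mul_pow]
  refine Ideal.mem_sup_left ?_
  rcases h with h | h
  · refine Ideal.mem_sup_left (Ideal.mul_mem_right _ _ ?_)
    simpa using Ideal.mem_map_of_mem
      (rename (R := K) (fun i : Fin 3 => (Sum.inr (Sum.inl i) : Fin 3 ⊕ (Fin 3 ⊕ Fin 3)))) h
  · refine Ideal.mem_sup_right (Ideal.mul_mem_left _ _ ?_)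
    simpa using Ideal.mem_map_of_mem
      (rename (R := K) (fun i : Fin 3 => (Sum.inr (Sum.inr i) : Fin 3 ⊕ (Fin 3 ⊕ Fin 3)))) h

theorem X_mem_pointIdeal {p : Fin 3 → K} {i j : Fin 3} (hi : p i = 0) (hj : p j ≠ 0) :
    X i ∈ pointIdeal p := by
  have h : C (p j) * X i - C (p i) * X j ∈ pointIdeal p := Ideal.subset_span ⟨i, j, rfl⟩
  have h' := Ideal.mul_mem_left _ (C (p j)⁻¹) h
  simpa [hi, ← mul_assoc, ← C_mul, inv_mul_cancel₀ hj] using h'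

/-- If `y` and `z` are substitutions sending `I` and `J` into `L`, then substituting
`y_i z_i` for `x_i` sends `I ⋆ J` into `L`. -/
theorem aeval_mul_mem_of_mem_hadamard {σ : Type*} {I J : Ideal (MvPolynomial (Fin 3) K)}
    {L : Ideal (MvPolynomial σ K)} (y z : Fin 3 → MvPolynomial σ K)
    (hy : I ≤ L.comap (aeval y)) (hz : J ≤ L.comap (aeval z))
    {f : MvPolynomial (Fin 3) K} (hf : f ∈ hadamard I J) :
    aeval (fun i => y i * z i) f ∈ L := by
  let φ : MvPolynomial (Fin 3 ⊕ (Fin 3 ⊕ Fin 3)) K →ₐ[K] MvPolynomial σ K :=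
    aeval (Sum.elim (fun i => y i * z i) (Sum.elim y z))
  have hle : Ideal.map (rename fun i : Fin 3 => (Sum.inr (Sum.inl i) : Fin 3 ⊕ (Fin 3 ⊕ Fin 3))) I
      + Ideal.map (rename fun i : Fin 3 => (Sum.inr (Sum.inr i) : Fin 3 ⊕ (Fin 3 ⊕ Fin 3))) J
      + Ideal.span { f | ∃ i : Fin 3,
          f = X (Sum.inl i) - X (Sum.inr (Sum.inl i)) * X (Sum.inr (Sum.inr i)) }
      ≤ L.comap φ := by
    refine sup_le (sup_le (Ideal.map_le_iff_le_comap.mpr fun g hg => ?_)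
      (Ideal.map_le_iff_le_comap.mpr fun g hg => ?_)) (Ideal.span_le.mpr ?_)
    · simpa only [Ideal.mem_comap, φ, RingHom.coe_coe, aeval_rename, Function.comp_def,
        Sum.elim_inl, Sum.elim_inr] using hy hg
    · simpa only [Ideal.mem_comap, φ, RingHom.coe_coe, aeval_rename, Function.comp_def,
        Sum.elim_inl, Sum.elim_inr] using hz hg
    · rintro _ ⟨i, rfl⟩
      simp [φ]
  simpa only [Ideal.mem_comap, φ, aeval_rename, Function.comp_def, Sum.elim_inl] using hle hf

/-- A substitution `y` congruent modulo `g` to a multiple of the point `p` sends `I(p)^k` into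
any ideal containing `g^k`. -/
theorem pointIdeal_pow_le_comap_aeval {σ : Type*} {p : Fin 3 → K} {y : Fin 3 → MvPolynomial σ K}
    {L : Ideal (MvPolynomial σ K)} {g : MvPolynomial σ K} {k : ℕ} (hg : g ^ k ∈ L)
    (t : MvPolynomial σ K) (h : ∀ i, g ∣ y i - C (p i) * t) :
    pointIdeal p ^ k ≤ L.comap (aeval y) := by
  have hle : pointIdeal p ≤ (Ideal.span {g}).comap (aeval y) := by
    refine Ideal.span_le.mpr ?_
    rintro _ ⟨i, j, rfl⟩
    have hij : C (p j) * y i - C (p i) * y j =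
        C (p j) * (y i - C (p i) * t) - C (p i) * (y j - C (p j) * t) := by ring
    simpa [Ideal.mem_span_singleton, algebraMap_eq, hij] using
      dvd_sub (Dvd.dvd.mul_left (h i) (C (p j))) (Dvd.dvd.mul_left (h j) (C (p i)))
  refine (Ideal.pow_right_mono hle k).trans ((Ideal.le_comap_pow _ k).trans (Ideal.comap_mono ?_))
  rwa [Ideal.span_singleton_pow, Ideal.span_singleton_le_iff_mem]

theorem hadamard_pow_pointIdeal_eq_span {p₀ p₂ q₀ q₁ : K} (hp₀ : p₀ ≠ 0) (hp₂ : p₂ ≠ 0)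
    (hq₀ : q₀ ≠ 0) (hq₁ : q₁ ≠ 0) (m n : ℕ) :
    hadamard (pointIdeal ![p₀, 0, p₂] ^ m) (pointIdeal ![q₀, q₁, 0] ^ n)
      = Ideal.span {(X 1 : MvPolynomial (Fin 3) K) ^ m, (X 2 : MvPolynomial (Fin 3) K) ^ n} := by
  apply le_antisymm
  · intro f hf
    apply mem_span_X_pow_pair_of_chartMap_mem
    let t : MvPolynomial (Fin 3) K := C (p₀ * q₀)⁻¹ * X 0
    have key := aeval_mul_mem_of_mem_hadamard
      (L := Ideal.span {(X 1 : MvPolynomial (Fin 3) K) ^ m, (X 2 : MvPolynomial (Fin 3) K) ^ n})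
      ![C p₀ * t, C q₁⁻¹ * X 1, C p₂ * t] ![C q₀, C q₁, C (p₀ * q₀ / p₂) * X 2]
      (pointIdeal_pow_le_comap_aeval (g := X 1) (Ideal.subset_span (by simp)) t
        (by intro i; fin_cases i <;> simp))
      (pointIdeal_pow_le_comap_aeval (g := X 2) (Ideal.subset_span (by simp)) 1
        (by intro i; fin_cases i <;> simp)) hf
    have hsubst : (fun i => ![C p₀ * t, C q₁⁻¹ * X 1, C p₂ * t] i *
        ![C q₀, C q₁, C (p₀ * q₀ / p₂) * X 2] i) = ![X 0, X 1, X 0 * X 2] := by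
      have h₀ : (C p₀ * C (p₀ * q₀)⁻¹ * C q₀ : MvPolynomial (Fin 3) K) = 1 := by
        rw [← C_mul, ← C_mul, ← C_1]; congr 1; field_simp
      have h₁ : (C q₁⁻¹ * C q₁ : MvPolynomial (Fin 3) K) = 1 := by
        rw [← C_mul, inv_mul_cancel₀ hq₁, C_1]
      have h₂ : (C p₂ * C (p₀ * q₀)⁻¹ * C (p₀ * q₀ / p₂) : MvPolynomial (Fin 3) K) = 1 := by
        rw [← C_mul, ← C_mul, ← C_1]; congr 1; field_simp
      funext i
      fin_cases i <;> simp only [Fin.reduceFinMk, Fin.zero_eta, Fin.mk_one, Matrix.cons_val, t]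
      · linear_combination X 0 * h₀
      · linear_combination X 1 * h₁
      · linear_combination X 0 * X 2 * h₂
    rwa [hsubst] at key
  · rw [Ideal.span_le]
    rintro _ (rfl | rfl)
    · exact X_pow_mem_hadamard <| Or.inl <| Ideal.pow_mem_pow
        (X_mem_pointIdeal (j := 0) (by simp) (by simpa)) m
    · exact X_pow_mem_hadamard <| Or.inr <| Ideal.pow_mem_pow
        (X_mem_pointIdeal (j := 0) (by simp) (by simpa)) n

theorem pointIdeal_eq_span_X_pair {p : Fin 3 → K} (h₀ : p 0 ≠ 0) (h₁ : p 1 = 0) (h₂ : p 2 = 0) :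
    pointIdeal p = Ideal.span {(X 1 : MvPolynomial (Fin 3) K), X 2} := by
  apply le_antisymm
  · refine Ideal.span_le.mpr ?_
    have hX₁ : (X 1 : MvPolynomial (Fin 3) K) ∈ Ideal.span {(X 1 : MvPolynomial (Fin 3) K), X 2} :=
      Ideal.subset_span (by simp)
    have hX₂ : (X 2 : MvPolynomial (Fin 3) K) ∈ Ideal.span {(X 1 : MvPolynomial (Fin 3) K), X 2} :=
      Ideal.subset_span (by simp)
    rintro _ ⟨i, j, rfl⟩
    fin_cases i <;> fin_cases j <;> simp [h₁, h₂, Ideal.mul_mem_left, hX₁, hX₂]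
  · rw [Ideal.span_le]
    rintro _ (rfl | rfl)
    exacts [X_mem_pointIdeal h₁ h₀, X_mem_pointIdeal h₂ h₀]

theorem X_one_pow_notMem_span_X_pair_pow {m k : ℕ} (h : m < k) :
    (X 1 : MvPolynomial (Fin 3) K) ^ m ∉
      Ideal.span {(X 1 : MvPolynomial (Fin 3) K), X 2} ^ k := by
  intro hmem
  have := Ideal.mem_map_of_mem (aeval (R := K) ![0, (Polynomial.X : Polynomial K), 0]) hmem
  rw [Ideal.map_pow, Ideal.map_span, Set.image_pair] at this
  simp [Ideal.span_singleton_pow,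
    Ideal.mem_span_singleton, Polynomial.X_pow_dvd_iff] at this
  exact absurd this (by simpa using h)

theorem span_pair_pow_le {R : Type*} [CommRing R] (a b : R) {m n k : ℕ} (h : m + n ≤ k + 1) :
    Ideal.span {a, b} ^ k ≤ Ideal.span {a ^ m, b ^ n} := by
  rw [Ideal.span_insert, ← Ideal.add_eq_sup, add_pow, Ideal.sum_eq_sup]
  refine Finset.sup_le fun i hi => Ideal.mul_le_left.trans ?_
  rw [Finset.mem_range] at hi
  rw [Ideal.span_singleton_pow, Ideal.span_singleton_pow]
  by_cases hmi : m ≤ i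
  · refine Ideal.mul_le_left.trans ((Ideal.span_singleton_le_iff_mem _).mpr ?_)
    exact Ideal.mem_of_dvd _ (pow_dvd_pow a hmi) (Ideal.subset_span (by simp))
  · refine Ideal.mul_le_right.trans ((Ideal.span_singleton_le_iff_mem _).mpr ?_)
    exact Ideal.mem_of_dvd _ (pow_dvd_pow b (show n ≤ k - i by omega)) (Ideal.subset_span (by simp))

/-- Let `P = [p_0:0:p_2]` and `Q = [q_0:q_1:0]` with `p_0 p_2 q_0 q_1 ≠ 0`, and let
`1 ≤ m ≤ n`. Then `I(P)^m ⋆ I(Q)^n = ⟨x_1^m, x_2^n⟩`, where `I(P ⋆ Q) = ⟨x_1, x_2⟩`;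
consequently `I(P ⋆ Q)^{m+n−1} ⊆ I(P)^m ⋆ I(Q)^n ⊆ I(P ⋆ Q)^m`, and moreover
`I(P)^m ⋆ I(Q)^n ≠ I(P ⋆ Q)^{m+n−1}` unless `m = n = 1`. -/
theorem hadamard_pow_pointIdeal_two_zero_coords [IsAlgClosed K]
    (p₀ p₂ q₀ q₁ : K) (h : p₀ * p₂ * q₀ * q₁ ≠ 0) (m n : ℕ) (hm : 1 ≤ m) (hmn : m ≤ n) :
    hadamard (pointIdeal ![p₀, 0, p₂] ^ m) (pointIdeal ![q₀, q₁, 0] ^ n)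
        = Ideal.span {(X 1 : MvPolynomial (Fin 3) K) ^ m, (X 2 : MvPolynomial (Fin 3) K) ^ n} ∧
    pointIdeal (fun i => ![p₀, 0, p₂] i * ![q₀, q₁, 0] i)
        = Ideal.span {(X 1 : MvPolynomial (Fin 3) K), X 2} ∧
    pointIdeal (fun i => ![p₀, 0, p₂] i * ![q₀, q₁, 0] i) ^ (m + n - 1)
        ≤ hadamard (pointIdeal ![p₀, 0, p₂] ^ m) (pointIdeal ![q₀, q₁, 0] ^ n) ∧
    hadamard (pointIdeal ![p₀, 0, p₂] ^ m) (pointIdeal ![q₀, q₁, 0] ^ n)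
        ≤ pointIdeal (fun i => ![p₀, 0, p₂] i * ![q₀, q₁, 0] i) ^ m ∧
    (¬ (m = 1 ∧ n = 1) →
      hadamard (pointIdeal ![p₀, 0, p₂] ^ m) (pointIdeal ![q₀, q₁, 0] ^ n)
        ≠ pointIdeal (fun i => ![p₀, 0, p₂] i * ![q₀, q₁, 0] i) ^ (m + n - 1)) := by
  have hp₀ : p₀ ≠ 0 := by rintro rfl; simp at h
  have hp₂ : p₂ ≠ 0 := by rintro rfl; simp at h
  have hq₀ : q₀ ≠ 0 := by rintro rfl; simp at h
  have hq₁ : q₁ ≠ 0 := by rintro rfl; simp at h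
  rw [hadamard_pow_pointIdeal_eq_span hp₀ hp₂ hq₀ hq₁,
    pointIdeal_eq_span_X_pair (p := fun i => ![p₀, 0, p₂] i * ![q₀, q₁, 0] i)
      (by simp [hp₀, hq₀]) (by simp) (by simp)]
  refine ⟨rfl, rfl, ?_, ?_, fun hne heq => ?_⟩
  · exact span_pair_pow_le _ _ (by omega)
  · rw [Ideal.span_le]
    rintro _ (rfl | rfl)
    · exact Ideal.pow_mem_pow (Ideal.subset_span (by simp)) m
    · exact Ideal.pow_le_pow_right hmn (Ideal.pow_mem_pow (Ideal.subset_span (by simp)) n)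
  · refine X_one_pow_notMem_span_X_pair_pow (K := K) (m := m) (k := m + n - 1) (by omega) ?_
    rw [← heq]
    exact Ideal.subset_span (by simp)
end
end

section
/- With H_i and V_j as below, set a_i = m_{r−i+1} + n_s − 1 for i = 1,…,r and b_j = n_{s−j+1} − n_s for j = 1,…,s, and for k = 0, 1, …, m_r + n_s − 1 set g_k = (∏_{i=1}^r H_i^{(a_i−k)_+}) · (∏_{j=1}^s V_j^{(b_j+k)_+}), where (a)_+ = max{a,0} and a factor with nonpositive exponent is taken to be 1. Then the ideal I of the Hadamard fat grid HFG(P_M,Q_N) is generated by the m_r + n_s forms g_0, g_1, …, g_{m_r+n_s−1}, and these form a minimal generating set of I (no proper subset of them generates I). -/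
open MvPolynomial

noncomputable section

variable {K : Type*} [Field K]

/-- The ideal of the Hadamard fat grid `HFG(P_M, Q_N)` determined by collinear points
`P_0, …, P_r` and `Q_0, …, Q_s` of `ℙ²` with multiplicities `m` and `n`:
`I = ⋂_{i,j} I(P_i ⋆ Q_j)^{m_i + n_j − 1}`, where `P_i ⋆ Q_j` is the coordinatewise
product of points. -/
def gridIdeal {r s : ℕ} (P : Fin (r+1) → Fin 3 → K) (Q : Fin (s+1) → Fin 3 → K)
    (m : Fin (r+1) → ℕ) (n : Fin (s+1) → ℕ) : Ideal (MvPolynomial (Fin 3) K) :=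
  ⨅ i, ⨅ j, pointIdeal (fun t => P i t * Q j t) ^ (m i + n j - 1)

/-- The `t`-th symbolic power of the ideal of the Hadamard fat grid:
`I^{(t)} = ⋂_{i,j} I(P_i ⋆ Q_j)^{t(m_i + n_j − 1)}`. -/
def gridSymbolicPow {r s : ℕ} (P : Fin (r+1) → Fin 3 → K) (Q : Fin (s+1) → Fin 3 → K)
    (m : Fin (r+1) → ℕ) (n : Fin (s+1) → ℕ) (t : ℕ) : Ideal (MvPolynomial (Fin 3) K) :=
  ⨅ i, ⨅ j, pointIdeal (fun t' => P i t' * Q j t') ^ (t * (m i + n j - 1))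

/-- The `k`-th generator `g_k = (∏_i H_i^{(a_i−k)_+}) · (∏_j V_j^{(b_j+k)_+})` of the
ideal of a Hadamard fat grid, where `a_i = m_{r−i+1} + n_s − 1`, `b_j = n_{s−j+1} − n_s`,
`H_i, V_j` are linear forms with coefficient vectors `H i`, `V j`, and `(a)_+ = max{a,0}`
(a factor with nonpositive exponent is taken to be `1`). Here indices are zero-based, so
the paper's `index r − i + 1` becomes `Fin.rev i` and `n_s` becomes `n (Fin.last s)`. -/
def gridGen {r s : ℕ} (H : Fin (r+1) → Fin 3 → K) (V : Fin (s+1) → Fin 3 → K)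
    (m : Fin (r+1) → ℕ) (n : Fin (s+1) → ℕ) (k : ℕ) : MvPolynomial (Fin 3) K :=
  (∏ i, (∑ t, C (H i t) * X t) ^
      (((m (Fin.rev i) : ℤ) + (n (Fin.last s) : ℤ) - 1 - (k : ℤ)).toNat)) *
  (∏ j, (∑ t, C (V j t) * X t) ^
      (((n (Fin.rev j) : ℤ) - (n (Fin.last s) : ℤ) + (k : ℤ)).toNat))

/-- If `f` lies in `(h i, v) ^ c i` for every `i`, where the `(h i, v)` are distinct primes over
the prime `v`, then `f` lies in `(∏ i, h i ^ c i, v)`. -/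
theorem exists_eq_prod_mul_add_mul {R ι : Type*} [CommRing R] {h : ι → R} {v : R}
    (hv : Prime v) (hp : ∀ i, (Ideal.span {h i, v}).IsPrime) (hvh : ∀ i, ¬ v ∣ h i)
    (hne : ∀ i k, k ≠ i → h k ∉ Ideal.span {h i, v}) (s : Finset ι) (c : ι → ℕ) {f : R}
    (hf : ∀ i ∈ s, f ∈ Ideal.span {h i, v} ^ c i) :
    ∃ a b, f = (∏ i ∈ s, h i ^ c i) * a + v * b := by
  classical
  have : (Ideal.span {v}).IsPrime := (Ideal.span_singleton_prime hv.ne_zero).2 hv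
  let π := Ideal.Quotient.mk (Ideal.span {v})
  have hπ : ∀ x, π x = 0 ↔ v ∣ x := fun x => by
    rw [Ideal.Quotient.eq_zero_iff_mem, Ideal.mem_span_singleton]
  have hdvd : ∀ i x, π (h i) ∣ π x ↔ x ∈ Ideal.span {h i, v} := by
    intro i x
    rw [Ideal.mem_span_pair]
    constructor
    · rintro ⟨y, hy⟩
      obtain ⟨y, rfl⟩ := Ideal.Quotient.mk_surjective y
      obtain ⟨z, hz⟩ := (hπ (x - h i * y)).1 (by rw [map_sub, map_mul, hy, sub_self])
      exact ⟨y, z, by linear_combination -hz⟩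
    · rintro ⟨y, z, rfl⟩
      exact ⟨π y, by rw [map_add, map_mul, map_mul, (hπ v).2 dvd_rfl]; ring⟩
  have hprime : ∀ i, Prime (π (h i)) := by
    refine fun i => ⟨fun h0 => hvh i ((hπ _).1 h0), fun hu => (hp i).ne_top ?_, fun x y hxy => ?_⟩
    · rw [Ideal.eq_top_iff_one, ← hdvd, map_one]
      exact hu.dvd
    · obtain ⟨x, rfl⟩ := Ideal.Quotient.mk_surjective x
      obtain ⟨y, rfl⟩ := Ideal.Quotient.mk_surjective y
      change π (h i) ∣ π x * π y at hxy
      rw [← map_mul, hdvd] at hxy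
      exact ((hp i).mem_or_mem hxy).imp (hdvd i x).2 (hdvd i y).2
  have hpow : ∀ i ∈ s, π (h i) ^ c i ∣ π f := by
    intro i hi
    have := Ideal.mem_map_of_mem π (hf i hi)
    rw [Ideal.map_pow, Ideal.map_span, Set.image_pair, (hπ v).2 dvd_rfl, Set.pair_comm,
      Ideal.span_insert_zero, Ideal.span_singleton_pow] at this
    exact Ideal.mem_span_singleton.1 this
  have key : ∀ t ⊆ s, π (∏ i ∈ t, h i ^ c i) ∣ π f := by
    intro t
    induction t using Finset.induction_on with
    | empty => simp
    | insert k t hk ih =>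
      intro ht
      obtain ⟨y, hy⟩ := ih fun i hi => ht (Finset.mem_insert_of_mem hi)
      have h1 : π (h k) ^ c k ∣ y := by
        refine (hprime k).pow_dvd_of_dvd_mul_left _ ?_ (hy ▸ hpow k (ht (Finset.mem_insert_self _ _)))
        rw [map_prod]
        intro h2
        obtain ⟨i, hi, h3⟩ := (hprime k).exists_mem_finset_dvd h2
        rw [map_pow] at h3
        exact hne k i (fun e => hk (e ▸ hi)) ((hdvd k _).1 ((hprime k).dvd_of_dvd_pow h3))
      rw [Finset.prod_insert hk, map_mul, map_pow, hy, mul_comm (π (h k) ^ c k)]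
      exact mul_dvd_mul_left _ h1
  obtain ⟨y, hy⟩ := key s subset_rfl
  obtain ⟨y, rfl⟩ := Ideal.Quotient.mk_surjective y
  obtain ⟨z, hz⟩ := (hπ (f - (∏ i ∈ s, h i ^ c i) * y)).1 (by rw [map_sub, map_mul, hy, sub_self])
  exact ⟨y, z, by linear_combination hz⟩

/-- An element lying in the powers `(H i, V j) ^ (a i + b j)₊` for all `i` and `j` is a
combination of the products `∏ i, H i ^ (a i - k)₊ * ∏ j, V j ^ (b j + k)₊`. -/
theorem mem_span_prod_mul_prod {R ι κ : Type*} [CommRing R] [Fintype ι] [Fintype κ]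
    {H : ι → R} {V : κ → R} (hV : ∀ j, Prime (V j))
    (hp : ∀ i j, (Ideal.span {H i, V j}).IsPrime) (hVH : ∀ i j, ¬ V j ∣ H i)
    (hH : ∀ i j k, k ≠ i → H k ∉ Ideal.span {H i, V j})
    (hcolon : ∀ i j l c f, l ≠ j →
      V l * f ∈ Ideal.span {H i, V j} ^ c → f ∈ Ideal.span {H i, V j} ^ c)
    (hcolon' : ∀ i j c f,
      V j * f ∈ Ideal.span {H i, V j} ^ (c + 1) → f ∈ Ideal.span {H i, V j} ^ c)
    (a : ι → ℤ) (b : κ → ℤ) {f : R}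
    (hf : ∀ i j, f ∈ Ideal.span {H i, V j} ^ (a i + b j).toNat) :
    f ∈ Ideal.span (Set.range fun k : ℤ =>
      (∏ i, H i ^ (a i - k).toNat) * ∏ j, V j ^ (b j + k).toNat) := by
  classical
  obtain ⟨A, hA⟩ : ∃ A, ∀ i, a i ≤ A := by
    obtain ⟨A, hA⟩ := (Set.finite_range a).bddAbove
    exact ⟨A, fun i => hA ⟨i, rfl⟩⟩
  induction hN : ∑ j, (b j + A).toNat using Nat.strong_induction_on generalizing b f with
  | _ N ih =>
  by_cases hb : ∀ j, b j + A ≤ 0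
  · have : f = f * ((∏ i, H i ^ (a i - A).toNat) * ∏ j, V j ^ (b j + A).toNat) := by
      rw [Finset.prod_eq_one, Finset.prod_eq_one, one_mul, mul_one]
      · intro j _
        rw [Int.toNat_of_nonpos (hb j), pow_zero]
      · intro i _
        rw [Int.toNat_of_nonpos (by linarith [hA i]), pow_zero]
    rw [this]
    exact Ideal.mul_mem_left _ _ (Ideal.subset_span ⟨A, rfl⟩)
  push Not at hb
  obtain ⟨j₁, hj₁⟩ := hb
  obtain ⟨j₀, -, hmax⟩ := Finset.exists_max_image Finset.univ b ⟨j₁, Finset.mem_univ _⟩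
  replace hmax : ∀ j, b j ≤ b j₀ := fun j => hmax j (Finset.mem_univ _)
  have hj₀ : 0 < b j₀ + A := by linarith [hmax j₁]
  obtain ⟨x, y, hxy⟩ := exists_eq_prod_mul_add_mul (hV j₀) (fun i => hp i j₀) (fun i => hVH i j₀)
    (fun i k => hH i j₀ k) Finset.univ (fun i => (a i + b j₀).toNat) (fun i _ => hf i j₀)
  set J := Ideal.span (Set.range fun k : ℤ =>
      (∏ i, H i ^ (a i - k).toNat) * ∏ j, V j ^ (b j + k).toNat) with hJ
  have hprodJ : ∏ i, H i ^ (a i + b j₀).toNat ∈ J := by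
    refine Ideal.subset_span ⟨-b j₀, ?_⟩
    beta_reduce
    rw [Finset.prod_eq_one (s := Finset.univ) (f := fun j => V j ^ _), mul_one]
    · simp
    · intro j _
      rw [Int.toNat_of_nonpos (by linarith [hmax j]), pow_zero]
  rw [hxy]
  refine J.add_mem (J.mul_mem_right _ hprodJ) ?_
  have hprod : ∀ i j, ∏ i, H i ^ (a i + b j₀).toNat ∈ Ideal.span {H i, V j} ^ (a i + b j).toNat := by
    intro i j
    refine Ideal.mem_of_dvd _ (Finset.dvd_prod_of_mem _ (Finset.mem_univ i)) ?_
    refine Ideal.pow_le_pow_right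
      (Int.toNat_le_toNat (add_le_add_right (hmax j) (a i) : a i + b j ≤ a i + b j₀)) ?_
    exact Ideal.pow_mem_pow (Ideal.subset_span (by simp)) _
  have hVy : ∀ i j, V j₀ * y ∈ Ideal.span {H i, V j} ^ (a i + b j).toNat := by
    intro i j
    rw [eq_sub_of_add_eq' hxy.symm]
    exact Ideal.sub_mem _ (hf i j) (Ideal.mul_mem_right _ _ (hprod i j))
  have hy : y ∈ Ideal.span (Set.range fun k : ℤ => (∏ i, H i ^ (a i - k).toNat) *
      ∏ j, V j ^ (Function.update b j₀ (b j₀ - 1) j + k).toNat) := by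
    refine ih _ ?_ _ ?_ rfl
    · rw [← hN]
      refine Finset.sum_lt_sum (fun j _ => ?_) ⟨j₀, Finset.mem_univ _, ?_⟩
      · rcases eq_or_ne j j₀ with rfl | hj
        · rw [Function.update_self]; omega
        · rw [Function.update_of_ne hj]
      · rw [Function.update_self]; omega
    · intro i j
      rcases eq_or_ne j j₀ with rfl | hj
      · rw [Function.update_self]
        rcases le_or_gt (a i + b j) 0 with h0 | h0
        · rw [Int.toNat_of_nonpos (by linarith : a i + (b j - 1) ≤ 0), pow_zero, Ideal.one_eq_top]
          trivial
        · apply hcolon'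
          convert hVy i j using 2
          omega
      · rw [Function.update_of_ne hj]
        exact hcolon i j j₀ _ _ hj.symm (hVy i j)
  refine Submodule.span_induction (p := fun z _ => V j₀ * z ∈ J) ?_ ?_ ?_ ?_ hy
  · rintro _ ⟨k, rfl⟩
    beta_reduce
    rcases le_or_gt k (-b j₀) with hk | hk
    · refine J.mul_mem_left _ (J.mul_mem_right _ (Ideal.mem_of_dvd _ ?_ hprodJ))
      exact Finset.prod_dvd_prod_of_dvd _ _ fun i _ =>
        pow_dvd_pow _ (Int.toNat_le_toNat (by omega))
    · refine Ideal.subset_span ⟨k, ?_⟩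
      beta_reduce
      rw [mul_left_comm]
      congr 1
      rw [← Finset.mul_prod_erase _ _ (Finset.mem_univ j₀),
        ← Finset.mul_prod_erase _ (fun j => V j ^ (Function.update b j₀ _ j + k).toNat)
          (Finset.mem_univ j₀), ← mul_assoc, Function.update_self, ← pow_succ']
      congr 1
      · congr 1
        omega
      · refine Finset.prod_congr rfl fun j hj => ?_
        rw [Function.update_of_ne (Finset.ne_of_mem_erase hj)]
  · rw [mul_zero]; exact J.zero_mem
  · intro u w _ _ hu hw
    rw [mul_add]; exact J.add_mem hu hw
  · intro r u _ hu
    rw [smul_eq_mul, mul_left_comm]; exact J.mul_mem_left _ hu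

section PointIdeal

open scoped Matrix

/-- The linear form with coefficient vector `v`. -/
def linForm (v : Fin 3 → K) : MvPolynomial (Fin 3) K := ∑ t, C (v t) * X t

/-- The substitution pulling each point of the plane towards `q` along the line joining them,
in the affine chart where the zeroth coordinate is fixed. -/
def expandAt (q : Fin 3 → K) :
    MvPolynomial (Fin 3) K →ₐ[K] Polynomial (MvPolynomial (Fin 3) K) :=
  aeval fun i => Polynomial.C (C (q i / q 0) * X 0) * (1 - Polynomial.X) +
    Polynomial.X * Polynomial.C (X i)

theorem expandAt_X (q : Fin 3 → K) (i : Fin 3) : expandAt q (X i) =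
    Polynomial.C (C (q i / q 0) * X 0) * (1 - Polynomial.X) + Polynomial.X * Polynomial.C (X i) :=
  aeval_X _ _

theorem expandAt_C (q : Fin 3 → K) (c : K) : expandAt q (C c) = Polynomial.C (C c) :=
  algHom_C _ _

theorem expandAt_linForm (q v : Fin 3 → K) : expandAt q (linForm v) =
    Polynomial.C (C ((∑ t, v t * q t) / q 0) * X 0) * (1 - Polynomial.X) +
      Polynomial.X * Polynomial.C (linForm v) := by
  simp only [linForm, Fin.sum_univ_three, map_add, map_mul, expandAt_X, expandAt_C, add_div,
    mul_div_assoc]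
  ring

theorem eval_one_expandAt (q : Fin 3 → K) (f : MvPolynomial (Fin 3) K) :
    (expandAt q f).eval 1 = f := by
  induction f using MvPolynomial.induction_on with
  | C c => rw [expandAt_C, Polynomial.eval_C]
  | add f g hf hg => rw [map_add, Polynomial.eval_add, hf, hg]
  | mul_X f i hf => rw [map_mul, Polynomial.eval_mul, hf, expandAt_X]; simp

theorem expandAt_mem_reesAlgebra {q : Fin 3 → K} (hq : q 0 ≠ 0) (f : MvPolynomial (Fin 3) K) :
    expandAt q f ∈ reesAlgebra (pointIdeal q) := by
  induction f using MvPolynomial.induction_on with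
  | C c => rw [expandAt_C]; exact (reesAlgebra (pointIdeal q)).algebraMap_mem (C c)
  | add f g hf hg => rw [map_add]; exact add_mem hf hg
  | mul_X f i hf =>
    rw [map_mul]
    refine mul_mem hf ?_
    have : expandAt q (X i) = Polynomial.C (C (q i / q 0) * X 0) +
        Polynomial.monomial 1 (X i - C (q i / q 0) * X 0) := by
      rw [expandAt_X, ← Polynomial.C_mul_X_eq_monomial, Polynomial.C_sub]
      ring
    rw [this]
    refine add_mem ((reesAlgebra (pointIdeal q)).algebraMap_mem _)
      (reesAlgebra.monomial_mem.2 ?_)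
    rw [pow_one]
    have h1 : X i - C (q i / q 0) * X 0 = C (q 0)⁻¹ * (C (q 0) * X i - C (q i) * X 0) := by
      rw [mul_sub, ← mul_assoc, ← mul_assoc, ← C_mul, ← C_mul, inv_mul_cancel₀ hq, C_1, one_mul,
        div_eq_inv_mul]
    rw [h1]
    exact Ideal.mul_mem_left _ _ (Ideal.subset_span ⟨i, 0, rfl⟩)

/-- Membership in the powers of the ideal of a point is detected by the `X`-adic valuation. -/
theorem mem_pointIdeal_pow_iff {q : Fin 3 → K} (hq : q 0 ≠ 0) (c : ℕ)
    (f : MvPolynomial (Fin 3) K) :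
    f ∈ pointIdeal q ^ c ↔ Polynomial.X ^ c ∣ expandAt q f := by
  constructor
  · intro hf
    have hle : (pointIdeal q).map (expandAt q) ≤ Ideal.span {Polynomial.X} := by
      rw [pointIdeal, Ideal.map_span, Ideal.span_le]
      rintro _ ⟨_, ⟨i, j, rfl⟩, rfl⟩
      rw [SetLike.mem_coe, Ideal.mem_span_singleton]
      refine ⟨Polynomial.C (C (q j) * X i - C (q i) * X j), ?_⟩
      have h1 : C (q j) * C (q i / q 0) = (C (q i) * C (q j / q 0) : MvPolynomial (Fin 3) K) := by
        rw [← C_mul, ← C_mul]; congr 1; ring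
      have h2 := congrArg Polynomial.C h1
      simp only [map_sub, map_mul, expandAt_X, expandAt_C] at h2 ⊢
      linear_combination (Polynomial.C (X 0) * (1 - Polynomial.X)) * h2
    have h3 := Ideal.mem_map_of_mem (expandAt q) hf
    rw [Ideal.map_pow] at h3
    have h4 := Ideal.pow_right_mono hle c h3
    rwa [Ideal.span_singleton_pow, Ideal.mem_span_singleton] at h4
  · intro hf
    rw [← eval_one_expandAt q f, Polynomial.eval_eq_sum_range]
    refine Ideal.sum_mem _ fun k _ => Ideal.mul_mem_right _ _ ?_
    rcases lt_or_ge k c with hk | hk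
    · rw [Polynomial.X_pow_dvd_iff.1 hf k hk]
      exact Ideal.zero_mem _
    · exact Ideal.pow_le_pow_right hk
        ((mem_reesAlgebra_iff _ _).1 (expandAt_mem_reesAlgebra hq f) k)

theorem mem_pointIdeal_iff {q : Fin 3 → K} (hq : q 0 ≠ 0) (f : MvPolynomial (Fin 3) K) :
    f ∈ pointIdeal q ↔ Polynomial.X ∣ expandAt q f := by
  simpa using mem_pointIdeal_pow_iff hq 1 f

theorem isPrime_pointIdeal {q : Fin 3 → K} (hq : q 0 ≠ 0) : (pointIdeal q).IsPrime := by
  refine ⟨fun h => ?_, fun {x y} hxy => ?_⟩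
  · rw [Ideal.eq_top_iff_one, mem_pointIdeal_iff hq, map_one] at h
    exact Polynomial.prime_X.not_dvd_one h
  · rw [mem_pointIdeal_iff hq, map_mul] at hxy
    simpa only [mem_pointIdeal_iff hq] using Polynomial.prime_X.dvd_or_dvd hxy

theorem linForm_mem_pointIdeal_iff {q : Fin 3 → K} (hq : q 0 ≠ 0) (v : Fin 3 → K) :
    linForm v ∈ pointIdeal q ↔ ∑ t, v t * q t = 0 := by
  rw [mem_pointIdeal_iff hq, expandAt_linForm, Polynomial.X_dvd_iff]
  simp [hq]

theorem mem_pointIdeal_pow_of_mul_mem {q : Fin 3 → K} (hq : q 0 ≠ 0) {g f : MvPolynomial (Fin 3) K}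
    {c : ℕ} (hg : g ∉ pointIdeal q) (h : g * f ∈ pointIdeal q ^ c) : f ∈ pointIdeal q ^ c := by
  rw [mem_pointIdeal_iff hq] at hg
  rw [mem_pointIdeal_pow_iff hq, map_mul] at h
  rw [mem_pointIdeal_pow_iff hq]
  exact Polynomial.prime_X.pow_dvd_of_dvd_mul_left _ hg h

theorem mem_pointIdeal_pow_of_linForm_mul_mem {q v : Fin 3 → K} (hq : q 0 ≠ 0) (hv : v ≠ 0)
    (hvq : ∑ t, v t * q t = 0) {f : MvPolynomial (Fin 3) K} {c : ℕ}
    (h : linForm v * f ∈ pointIdeal q ^ (c + 1)) : f ∈ pointIdeal q ^ c := by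
  have hne : ¬ Polynomial.X ∣ Polynomial.C (linForm v) := by
    rw [Polynomial.X_dvd_iff, Polynomial.coeff_C_zero]
    intro h0
    refine hv (funext fun t => ?_)
    have := congrArg (MvPolynomial.eval (Pi.single t 1)) h0
    simpa [linForm, Pi.single_apply] using this
  rw [mem_pointIdeal_pow_iff hq, map_mul, expandAt_linForm, hvq, zero_div, C_0, zero_mul,
    Polynomial.C_0, zero_mul, zero_add, pow_succ', mul_assoc] at h
  rw [mem_pointIdeal_pow_iff hq]
  exact Polynomial.prime_X.pow_dvd_of_dvd_mul_left _ hne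
    ((mul_dvd_mul_iff_left Polynomial.X_ne_zero).1 h)

theorem eval_linForm (v x : Fin 3 → K) : eval x (linForm v) = ∑ t, v t * x t := by
  simp [linForm]

theorem coeff_linForm (v : Fin 3 → K) (t : Fin 3) : (linForm v).coeff (Finsupp.single t 1) = v t := by
  simp [linForm, coeff_sum, coeff_C_mul, coeff_X, Finsupp.single_left_inj]

theorem prime_linForm {v : Fin 3 → K} (hv : v ≠ 0) : Prime (linForm v) := by
  obtain ⟨t, ht⟩ := Function.ne_iff.1 hv
  rw [← UniqueFactorizationMonoid.irreducible_iff_prime]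
  refine irreducible_of_totalDegree_eq_one (le_antisymm ?_ ?_) fun c hc => ?_
  · refine totalDegree_finsetSum_le fun i _ => (totalDegree_mul _ _).trans ?_
    simp
  · have : Finsupp.single t 1 ∈ (linForm v).support := by
      rw [mem_support_iff, coeff_linForm]; exact ht
    simpa using le_totalDegree this
  · have := hc (Finsupp.single t 1)
    rw [coeff_linForm] at this
    exact isUnit_of_dvd_unit this (isUnit_iff_ne_zero.2 ht)

/-- The ideal of a point is generated by the equations of two distinct lines meeting there. -/
theorem span_linForm_pair {q v w : Fin 3 → K} (hq : q 0 ≠ 0) (hv : ∑ t, v t * q t = 0)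
    (hw : ∑ t, w t * q t = 0) {c : K} (hc : c ≠ 0) (hcross : v ⨯₃ w = c • q) :
    Ideal.span {linForm v, linForm w} = pointIdeal q := by
  apply le_antisymm
  · rw [Ideal.span_le]
    rintro _ (rfl | rfl)
    · exact (linForm_mem_pointIdeal_iff hq v).2 hv
    · exact (linForm_mem_pointIdeal_iff hq w).2 hw
  · rw [pointIdeal, Ideal.span_le]
    rintro _ ⟨i, j, rfl⟩
    have hcc : (C c⁻¹ * C c : MvPolynomial (Fin 3) K) = 1 := by
      rw [← C_mul, inv_mul_cancel₀ hc, C_1]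
    have h0 : (C (q 0) : MvPolynomial (Fin 3) K) =
        C c⁻¹ * (C (v 1) * C (w 2) - C (v 2) * C (w 1)) := by
      have := congrArg (C (σ := Fin 3)) (congrFun hcross 0)
      simp only [cross_apply, Matrix.cons_val, Pi.smul_apply, smul_eq_mul, map_sub, map_mul] at this
      linear_combination (-C (q 0)) * hcc - C c⁻¹ * this
    have h1 : (C (q 1) : MvPolynomial (Fin 3) K) =
        C c⁻¹ * (C (v 2) * C (w 0) - C (v 0) * C (w 2)) := by
      have := congrArg (C (σ := Fin 3)) (congrFun hcross 1)
      simp only [cross_apply, Matrix.cons_val, Pi.smul_apply, smul_eq_mul, map_sub, map_mul] at this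
      linear_combination (-C (q 1)) * hcc - C c⁻¹ * this
    have h2 : (C (q 2) : MvPolynomial (Fin 3) K) =
        C c⁻¹ * (C (v 0) * C (w 1) - C (v 1) * C (w 0)) := by
      have := congrArg (C (σ := Fin 3)) (congrFun hcross 2)
      simp only [cross_apply, Matrix.cons_val, Pi.smul_apply, smul_eq_mul, map_sub, map_mul] at this
      linear_combination (-C (q 2)) * hcc - C c⁻¹ * this
    have key : ∀ k, C c⁻¹ * (C (v k) * linForm w - C (w k) * linForm v) ∈
        Ideal.span {linForm v, linForm w} := fun k =>
      Ideal.mul_mem_left _ _ (Ideal.sub_mem _ (Ideal.mul_mem_left _ _ (Ideal.subset_span (by simp)))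
        (Ideal.mul_mem_left _ _ (Ideal.subset_span (by simp))))
    fin_cases i <;> fin_cases j
    · refine Set.mem_of_eq_of_mem ?_ (zero_mem _)
      simp
    · refine Set.mem_of_eq_of_mem ?_ (key 2)
      simp [linForm, Fin.sum_univ_three, h0, h1]
      ring
    · refine Set.mem_of_eq_of_mem ?_ (neg_mem (key 1))
      simp [linForm, Fin.sum_univ_three, h0, h2]
      ring
    · refine Set.mem_of_eq_of_mem ?_ (neg_mem (key 2))
      simp [linForm, Fin.sum_univ_three, h0, h1]
      ring
    · refine Set.mem_of_eq_of_mem ?_ (zero_mem _)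
      simp
    · refine Set.mem_of_eq_of_mem ?_ (key 0)
      simp [linForm, Fin.sum_univ_three, h1, h2]
      ring
    · refine Set.mem_of_eq_of_mem ?_ (key 1)
      simp [linForm, Fin.sum_univ_three, h0, h2]
      ring
    · refine Set.mem_of_eq_of_mem ?_ (neg_mem (key 0))
      simp [linForm, Fin.sum_univ_three, h1, h2]
      ring
    · refine Set.mem_of_eq_of_mem ?_ (zero_mem _)
      simp

theorem exists_dual_of_cross_ne_zero {v w : Fin 3 → K} (h : v ⨯₃ w ≠ 0) :
    ∃ y z : Fin 3 → K, (∑ t, v t * y t = 1 ∧ ∑ t, w t * y t = 0) ∧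
      (∑ t, v t * z t = 0 ∧ ∑ t, w t * z t = 1) := by
  obtain ⟨k, hk⟩ := Function.ne_iff.1 h
  rw [Pi.zero_apply] at hk
  refine ⟨((v ⨯₃ w) k)⁻¹ • (w ⨯₃ Pi.single k 1), ((v ⨯₃ w) k)⁻¹ • (Pi.single k 1 ⨯₃ v), ⟨?_, ?_⟩,
    ?_, ?_⟩
  · change v ⬝ᵥ _ = _
    rw [dotProduct_smul, triple_product_permutation, triple_product_permutation,
      single_one_dotProduct, smul_eq_mul, inv_mul_cancel₀ hk]
  · change w ⬝ᵥ _ = _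
    rw [dotProduct_smul, dot_self_cross, smul_zero]
  · change v ⬝ᵥ _ = _
    rw [dotProduct_smul, dot_cross_self, smul_zero]
  · change w ⬝ᵥ _ = _
    rw [dotProduct_smul, triple_product_permutation, single_one_dotProduct, smul_eq_mul,
      inv_mul_cancel₀ hk]

theorem not_linForm_dvd_linForm {v w : Fin 3 → K} (h : v ⨯₃ w ≠ 0) : ¬ linForm w ∣ linForm v := by
  rintro ⟨f, hf⟩
  obtain ⟨y, -, ⟨hv, hw⟩, -⟩ := exists_dual_of_cross_ne_zero h
  have := congrArg (eval y) hf
  rw [map_mul, eval_linForm, eval_linForm, hv, hw, zero_mul] at this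
  exact one_ne_zero this

/-- The substitution `x ↦ q + ε (y + σ z)`, with `ε` the outer and `σ` the inner variable. -/
def blowupChart (q y z : Fin 3 → K) :
    MvPolynomial (Fin 3) K →ₐ[K] Polynomial (Polynomial K) :=
  aeval fun i => Polynomial.C (Polynomial.C (q i)) +
    Polynomial.X * Polynomial.C (Polynomial.C (y i) + Polynomial.C (z i) * Polynomial.X)

theorem blowupChart_linForm (q y z v : Fin 3 → K) : blowupChart q y z (linForm v) =
    Polynomial.C (Polynomial.C (∑ t, v t * q t)) + Polynomial.X * Polynomial.C
      (Polynomial.C (∑ t, v t * y t) + Polynomial.C (∑ t, v t * z t) * Polynomial.X) := by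
  have hC : ∀ c, blowupChart q y z (C c) = Polynomial.C (Polynomial.C c) := fun c => algHom_C _ _
  have hX : ∀ i, blowupChart q y z (X i) = Polynomial.C (Polynomial.C (q i)) +
    Polynomial.X * Polynomial.C (Polynomial.C (y i) + Polynomial.C (z i) * Polynomial.X) :=
    fun i => aeval_X _ _
  simp only [linForm, Fin.sum_univ_three, map_add, map_mul, hC, hX]
  ring

theorem coeff_zero_blowupChart (q y z : Fin 3 → K) (f : MvPolynomial (Fin 3) K) :
    (blowupChart q y z f).coeff 0 = Polynomial.C (eval q f) := by
  induction f using MvPolynomial.induction_on with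
  | C c => rw [blowupChart, algHom_C, eval_C]; exact Polynomial.coeff_C_zero
  | add f g hf hg => rw [map_add, Polynomial.coeff_add, hf, hg, map_add, map_add]
  | mul_X f i hf =>
    rw [map_mul, Polynomial.mul_coeff_zero, hf, map_mul, map_mul, eval_X, blowupChart, aeval_X]
    simp

/-- Multiples of the distinct degree-`D` monomials in the equations of two lines meeting at `q`
by forms not vanishing at `q` are not generated by one another. -/
theorem notMem_span_linForm_pow_mul {v w q : Fin 3 → K} (hv : ∑ t, v t * q t = 0)
    (hw : ∑ t, w t * q t = 0) (hcross : v ⨯₃ w ≠ 0) {D : ℕ} (u : ℕ → MvPolynomial (Fin 3) K)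
    {S : Set ℕ} (hS : ∀ l ∈ S, l ≤ D) {k : ℕ} (hk : k ≤ D) (hkS : k ∉ S)
    (huk : eval q (u k) ≠ 0) :
    linForm v ^ (D - k) * linForm w ^ k * u k ∉
      Ideal.span ((fun l => linForm v ^ (D - l) * linForm w ^ l * u l) '' S) := by
  obtain ⟨y, z, ⟨hvy, hwy⟩, hvz, hwz⟩ := exists_dual_of_cross_ne_zero hcross
  have hgen : ∀ l ≤ D, ∀ c, ((blowupChart q y z
      (c * (linForm v ^ (D - l) * linForm w ^ l * u l))).coeff D).coeff k =
      if k = l then eval q (c * u l) else 0 := by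
    intro l hl c
    have h1 : blowupChart q y z (c * (linForm v ^ (D - l) * linForm w ^ l * u l)) =
        Polynomial.C (Polynomial.X ^ l) * (blowupChart q y z (c * u l) * Polynomial.X ^ D) := by
      rw [← Nat.sub_add_cancel hl, pow_add]
      simp only [map_mul, map_pow, blowupChart_linForm, hv, hw, hvy, hwy, hvz, hwz, Polynomial.C_0, zero_add, add_zero,
        Polynomial.C_1, one_mul, zero_mul, mul_one, Nat.add_sub_cancel]
      ring
    rw [h1, Polynomial.coeff_C_mul, Polynomial.coeff_mul_X_pow', if_pos le_rfl, Nat.sub_self,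
      coeff_zero_blowupChart, mul_comm, Polynomial.coeff_C_mul_X_pow]
  intro hmem
  have key : ∀ c, ((blowupChart q y z
      (c * (linForm v ^ (D - k) * linForm w ^ k * u k))).coeff D).coeff k = 0 := by
    refine Submodule.span_induction
      (p := fun f _ => ∀ c, ((blowupChart q y z (c * f)).coeff D).coeff k = 0) ?_ ?_ ?_ ?_ hmem
    · rintro _ ⟨l, hl, rfl⟩ c
      rw [hgen l (hS l hl), if_neg]
      rintro rfl
      exact hkS hl
    · simp
    · intro f g _ _ hf hg c
      rw [mul_add, map_add, Polynomial.coeff_add, Polynomial.coeff_add, hf, hg, add_zero]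
    · intro r f _ hf c
      rw [smul_eq_mul, ← mul_assoc]
      exact hf _
  have := key 1
  rw [hgen k hk, if_pos rfl, one_mul] at this
  exact huk this

end PointIdeal

/-- With `H_i` the linear forms of the horizontal grid lines and `V_j` those of the
vertical grid lines, the `m_r + n_s` forms `g_0, …, g_{m_r+n_s−1}` generate the ideal of
the Hadamard fat grid `HFG(P_M, Q_N)` minimally (no proper subset of them generates). -/
theorem gridIdeal_eq_span_gridGen [IsAlgClosed K]
    {r s : ℕ} (hrs : r ≤ s) (P : Fin (r+1) → Fin 3 → K) (Q : Fin (s+1) → Fin 3 → K)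
    (hP0 : ∀ i t, P i t ≠ 0) (hQ0 : ∀ j t, Q j t ≠ 0)
    (hPcol : ∃ a : Fin 3 → K, a ≠ 0 ∧ ∀ i, ∑ t, a t * P i t = 0)
    (hQcol : ∃ b : Fin 3 → K, b ≠ 0 ∧ ∀ j, ∑ t, b t * Q j t = 0)
    (m : Fin (r+1) → ℕ) (n : Fin (s+1) → ℕ)
    (hm1 : ∀ i, 1 ≤ m i) (hn1 : ∀ j, 1 ≤ n j) (hm : Monotone m) (hn : Monotone n)
    (hdist : ∀ i j k l, (i, j) ≠ ((k, l) : Fin (r+1) × Fin (s+1)) →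
      pointIdeal (fun t => P i t * Q j t) ≠ pointIdeal (fun t => P k t * Q l t))
    (H : Fin (r+1) → Fin 3 → K) (V : Fin (s+1) → Fin 3 → K)
    -- the linear forms `H_i`, `V_j` are pairwise non-proportional
    (hnp : ∀ a b : Fin (r+1) ⊕ Fin (s+1), a ≠ b → ∀ c : K,
      Sum.elim H V b ≠ c • Sum.elim H V a)
    -- `H_i` vanishes at `P_{r−i+1} ⋆ Q_j` for all `j`
    (hH : ∀ (i : Fin (r+1)) (j : Fin (s+1)), ∑ t, H i t * (P (Fin.rev i) t * Q j t) = 0)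
    -- `V_j` vanishes at `P_i ⋆ Q_{s−j+1}` for all `i`
    (hV : ∀ (j : Fin (s+1)) (i : Fin (r+1)), ∑ t, V j t * (P i t * Q (Fin.rev j) t) = 0)
    -- `P_i ⋆ Q_j` is the unique common zero of `H_{r−i+1}` and `V_{s−j+1}`
    (huniq : ∀ (i : Fin (r+1)) (j : Fin (s+1)) (x : Fin 3 → K), x ≠ 0 →
      (∑ t, H (Fin.rev i) t * x t = 0) → (∑ t, V (Fin.rev j) t * x t = 0) →
      ∃ c : K, x = c • fun t => P i t * Q j t)
    -- `P_i ⋆ Q_j` lies on no other grid line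
    (hHnot : ∀ (i : Fin (r+1)) (j : Fin (s+1)) (k : Fin (r+1)), k ≠ Fin.rev i →
      ∑ t, H k t * (P i t * Q j t) ≠ 0)
    (hVnot : ∀ (i : Fin (r+1)) (j : Fin (s+1)) (l : Fin (s+1)), l ≠ Fin.rev j →
      ∑ t, V l t * (P i t * Q j t) ≠ 0) :
    Ideal.span (Set.range fun k : Fin (m (Fin.last r) + n (Fin.last s)) =>
        gridGen H V m n k) = gridIdeal P Q m n ∧
    ∀ T : Set (MvPolynomial (Fin 3) K),
      T ⊂ Set.range (fun k : Fin (m (Fin.last r) + n (Fin.last s)) => gridGen H V m n k) →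
      Ideal.span T ≠ gridIdeal P Q m n := by
  classical
  let q : Fin (r+1) → Fin (s+1) → Fin 3 → K := fun i j t => P i.rev t * Q j.rev t
  have hq : ∀ i j, q i j 0 ≠ 0 := fun i j => mul_ne_zero (hP0 _ _) (hQ0 _ _)
  have hHq : ∀ i j, ∑ t, H i t * q i j t = 0 := fun i j => hH i j.rev
  have hVq : ∀ i j, ∑ t, V j t * q i j t = 0 := fun i j => hV j i.rev
  have hHq' : ∀ i j k, k ≠ i → ∑ t, H k t * q i j t ≠ 0 := fun i j k hk =>
    hHnot i.rev j.rev k (by rwa [Fin.rev_rev])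
  have hVq' : ∀ i j l, l ≠ j → ∑ t, V l t * q i j t ≠ 0 := fun i j l hl =>
    hVnot i.rev j.rev l (by rwa [Fin.rev_rev])
  have hV0 : ∀ j, V j ≠ 0 := fun j h0 => hnp (Sum.inl 0) (Sum.inr j) (by simp) 0 (by simp [h0])
  have hcross : ∀ i j, crossProduct (H i) (V j) ≠ 0 := fun i j => by
    have hH0 : H i ≠ 0 := fun h0 => hnp (Sum.inr 0) (Sum.inl i) (by simp) 0 (by simp [h0])
    rw [crossProduct_ne_zero_iff_linearIndependent, LinearIndependent.pair_iff' hH0]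
    exact fun c hc => hnp (Sum.inl i) (Sum.inr j) (by simp) c hc.symm
  have hspan : ∀ i j, Ideal.span {linForm (H i), linForm (V j)} = pointIdeal (q i j) := by
    intro i j
    obtain ⟨c, hc⟩ := huniq i.rev j.rev (crossProduct (H i) (V j)) (hcross i j)
      (by rw [Fin.rev_rev]; exact dot_self_cross _ _)
      (by rw [Fin.rev_rev]; exact dot_cross_self _ _)
    refine span_linForm_pair (hq i j) (hHq i j) (hVq i j) (c := c) ?_ hc
    rintro rfl
    exact hcross i j (by rw [hc, zero_smul])
  let a : Fin (r+1) → ℤ := fun i => (m i.rev : ℤ) + n (Fin.last s) - 1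
  let b : Fin (s+1) → ℤ := fun j => (n j.rev : ℤ) - n (Fin.last s)
  have hgridIdeal : ∀ f, f ∈ gridIdeal P Q m n ↔
      ∀ i j, f ∈ Ideal.span {linForm (H i), linForm (V j)} ^ (a i + b j).toNat := by
    intro f
    simp only [gridIdeal, Ideal.mem_iInf]
    rw [← Fin.revPerm.forall_congr_right]
    refine forall_congr' fun i => ?_
    rw [← Fin.revPerm.forall_congr_right]
    refine forall_congr' fun j => ?_
    rw [hspan]
    have : (a i + b j).toNat = m i.rev + n j.rev - 1 := by
      simp only [a, b]; have := hm1 i.rev; omega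
    rw [this]
    rfl
  have hgen : ∀ k : ℕ, gridGen H V m n k =
      (∏ i, linForm (H i) ^ (a i - k).toNat) * ∏ j, linForm (V j) ^ (b j + k).toNat := fun k => rfl
  have hM := hm1 (Fin.last r)
  have hN := hn1 (Fin.last s)
  have hspan_eq : Ideal.span (Set.range fun k : Fin (m (Fin.last r) + n (Fin.last s)) =>
      gridGen H V m n k) = gridIdeal P Q m n := by
    apply le_antisymm
    · rw [Ideal.span_le]
      rintro _ ⟨k, rfl⟩
      rw [SetLike.mem_coe, hgridIdeal]
      intro i j
      beta_reduce
      rw [hgen]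
      refine Ideal.mem_of_dvd _ (mul_dvd_mul (Finset.dvd_prod_of_mem _ (Finset.mem_univ i))
        (Finset.dvd_prod_of_mem _ (Finset.mem_univ j))) ?_
      have hle : (a i + b j).toNat ≤ (a i - (k : ℕ)).toNat + (b j + (k : ℕ)).toNat := by omega
      refine Ideal.pow_le_pow_right hle ?_
      rw [pow_add]
      exact Ideal.mul_mem_mul (Ideal.pow_mem_pow (Ideal.subset_span (by simp)) _)
        (Ideal.pow_mem_pow (Ideal.subset_span (by simp)) _)
    · intro f hf
      have h1 := mem_span_prod_mul_prod (H := fun i => linForm (H i)) (V := fun j => linForm (V j))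
        (fun j => prime_linForm (hV0 j))
        (fun i j => by rw [hspan]; exact isPrime_pointIdeal (hq i j))
        (fun i j => not_linForm_dvd_linForm (hcross i j))
        (fun i j k hk => by
          rw [hspan, linForm_mem_pointIdeal_iff (hq i j)]; exact hHq' i j k hk)
        (fun i j l c f hl => by
          rw [hspan]
          refine mem_pointIdeal_pow_of_mul_mem (hq i j) ?_
          rw [linForm_mem_pointIdeal_iff (hq i j)]; exact hVq' i j l hl)
        (fun i j c f => by
          rw [hspan]; exact mem_pointIdeal_pow_of_linForm_mul_mem (hq i j) (hV0 j) (hVq i j))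
        a b ((hgridIdeal f).1 hf)
      refine Ideal.span_le.2 ?_ h1
      rintro _ ⟨k, rfl⟩
      let D := m (Fin.last r) + n (Fin.last s) - 1
      let l : ℕ := min k.toNat D
      have ha : ∀ i, a i ≤ D := fun i => by
        have := hm (Fin.le_last i.rev)
        simp only [a, D]
        omega
      have hb : ∀ j, b j ≤ 0 := fun j => by
        have := hn (Fin.le_last j.rev)
        simp only [b]
        omega
      refine Ideal.mem_of_dvd _ ?_ (Ideal.subset_span ⟨⟨l, by omega⟩, rfl⟩)
      beta_reduce
      rw [hgen]
      refine mul_dvd_mul (Finset.prod_dvd_prod_of_dvd _ _ fun i _ => pow_dvd_pow _ ?_)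
        (Finset.prod_dvd_prod_of_dvd _ _ fun j _ => pow_dvd_pow _ ?_)
      · have := ha i
        change (a i - (l : ℤ)).toNat ≤ _
        omega
      · have := hb j
        change (b j + (l : ℤ)).toNat ≤ _
        omega
  refine ⟨hspan_eq, fun T hT hTspan => ?_⟩
  obtain ⟨hTsub, hTne⟩ := hT
  obtain ⟨_, ⟨k, rfl⟩, hkT⟩ := Set.not_subset.1 hTne
  let u : ℕ → MvPolynomial (Fin 3) K := fun l =>
    (∏ i ∈ Finset.univ.erase 0, linForm (H i) ^ (a i - l).toNat) *
      ∏ j ∈ Finset.univ.erase 0, linForm (V j) ^ (b j + l).toNat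
  have hfac : ∀ l : ℕ, gridGen H V m n l =
      linForm (H 0) ^ (m (Fin.last r) + n (Fin.last s) - 1 - l) * linForm (V 0) ^ l * u l := by
    intro l
    have h1 : (a 0 - l).toNat = m (Fin.last r) + n (Fin.last s) - 1 - l := by
      simp only [a, Fin.rev_zero]; omega
    have h2 : (b 0 + l).toNat = l := by
      simp only [b, Fin.rev_zero]; omega
    rw [hgen, ← Finset.mul_prod_erase _ _ (Finset.mem_univ 0),
      ← Finset.mul_prod_erase _ (fun j => linForm (V j) ^ _) (Finset.mem_univ 0), h1, h2,
      mul_mul_mul_comm]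
  have hu : eval (q 0 0) (u k) ≠ 0 := by
    simp only [u, map_mul, map_prod, map_pow, eval_linForm]
    refine mul_ne_zero (Finset.prod_ne_zero_iff.2 fun i hi => pow_ne_zero _ ?_)
      (Finset.prod_ne_zero_iff.2 fun j hj => pow_ne_zero _ ?_)
    · exact hHq' 0 0 i (Finset.ne_of_mem_erase hi)
    · exact hVq' 0 0 j (Finset.ne_of_mem_erase hj)
  refine notMem_span_linForm_pow_mul (hHq 0 0) (hVq 0 0) (hcross 0 0) u
    (S := {l | l ≤ m (Fin.last r) + n (Fin.last s) - 1 ∧ l ≠ k})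
    (D := m (Fin.last r) + n (Fin.last s) - 1) (fun l hl => hl.1) (k := k) (by omega)
    (fun h => h.2 rfl) hu ?_
  rw [← hfac]
  have hmem : gridGen H V m n k ∈ Ideal.span T := by
    rw [hTspan, ← hspan_eq]
    exact Ideal.subset_span ⟨k, rfl⟩
  refine Ideal.span_mono ?_ hmem
  intro g hg
  obtain ⟨l, rfl⟩ := hTsub hg
  refine ⟨l, ⟨by omega, ?_⟩, (hfac l).symm⟩
  intro hlk
  exact hkT (Fin.ext hlk ▸ hg)
end
end
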